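/- For every integer p, the group presented on three generators r, x, y with the two relators r^p · (y x y⁻¹)⁻¹ and r^{-p} · (x y x⁻¹)⁻¹ is isomorphic to the group presented on two generators r, y with the single relator (y⁻¹ r^p y⁻¹) · (r^p y⁻¹ r^p)⁻¹. Equivalently, ⟨r, x, y ∣ r^p = y x y⁻¹, r^{-p} = x y x⁻¹⟩ ≅ ⟨r, y ∣ y⁻¹ r^p y⁻¹ = r^p y⁻¹ r^p⟩. -/

import Mathlib

open FreeGroup

/-- Generators `r`, `x`, `y` for the three-generator presentation:
`0 ↦ r`, `1 ↦ x`, `2 ↦ y` in `Fin 3`. Relators encode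
`r^p = y x y⁻¹` and `r^{-p} = x y x⁻¹`. -/
def threeGenRels (p : ℤ) : Set (FreeGroup (Fin 3)) :=
  { of 0 ^ p * (of 2 * of 1 * (of 2)⁻¹)⁻¹,
    of 0 ^ (-p) * (of 1 * of 2 * (of 1)⁻¹)⁻¹ }

/-- Generators `r`, `y` for the two-generator presentation:
`0 ↦ r`, `1 ↦ y` in `Fin 2`. The relator encodes
`y⁻¹ r^p y⁻¹ = r^p y⁻¹ r^p`. -/
def twoGenRels (p : ℤ) : Set (FreeGroup (Fin 2)) :=
  { (of 1)⁻¹ * of 0 ^ p * (of 1)⁻¹ * (of 0 ^ p * (of 1)⁻¹ * of 0 ^ p)⁻¹ }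

/-- The braid relation gives the second relator after substituting `x = y⁻¹ R y`. -/
theorem braid_to_conj {G : Type*} [Group G] (R y : G)
    (h : y⁻¹ * R * y⁻¹ = R * y⁻¹ * R) :
    R⁻¹ * ((y⁻¹ * R * y) * y * (y⁻¹ * R * y)⁻¹)⁻¹ = 1 := by
  calc R⁻¹ * ((y⁻¹ * R * y) * y * (y⁻¹ * R * y)⁻¹)⁻¹
      = R⁻¹ * (y⁻¹ * R * y⁻¹) * (R⁻¹ * y) := by group
    _ = R⁻¹ * (R * y⁻¹ * R) * (R⁻¹ * y) := by rw [h]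
    _ = 1 := by group

/-- The two relations give the braid relation. -/
theorem conj_to_braid {G : Type*} [Group G] (R x y : G)
    (h₁ : R = y * x * y⁻¹) (h₂ : R⁻¹ = x * y * x⁻¹) :
    y⁻¹ * R * y⁻¹ = R * y⁻¹ * R := by
  have hx : x = y⁻¹ * R * y := by rw [h₁]; group
  have hR : R = x * y⁻¹ * x⁻¹ := by rw [← inv_inv R, h₂]; group
  calc y⁻¹ * R * y⁻¹ = (y⁻¹ * R * y) * y⁻¹ * (y⁻¹ * R * y)⁻¹ * y⁻¹ * R := by group
    _ = R * y⁻¹ * R := by rw [← hx, ← hR]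

/-- `⟨r, x, y ∣ r^p = y x y⁻¹, r^{-p} = x y x⁻¹⟩ ≅
⟨r, y ∣ y⁻¹ r^p y⁻¹ = r^p y⁻¹ r^p⟩` for every integer `p`. -/
theorem presentation_eliminate_generator (p : ℤ) :
    Nonempty (PresentedGroup (threeGenRels p) ≃* PresentedGroup (twoGenRels p)) := by
  have h3a : (PresentedGroup.of 0 : PresentedGroup (threeGenRels p)) ^ p
      = PresentedGroup.of 2 * PresentedGroup.of 1 * (PresentedGroup.of 2)⁻¹ := by
    have h : PresentedGroup.mk (threeGenRels p)
        (of 0 ^ p * (of 2 * of 1 * (of 2)⁻¹)⁻¹) = 1 :=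
      PresentedGroup.one_of_mem (by simp [threeGenRels])
    simp only [_root_.map_mul, _root_.map_inv, _root_.map_zpow] at h
    exact mul_inv_eq_one.mp h
  have h3b : (PresentedGroup.of 0 : PresentedGroup (threeGenRels p)) ^ (-p)
      = PresentedGroup.of 1 * PresentedGroup.of 2 * (PresentedGroup.of 1)⁻¹ := by
    have h : PresentedGroup.mk (threeGenRels p)
        (of 0 ^ (-p) * (of 1 * of 2 * (of 1)⁻¹)⁻¹) = 1 :=
      PresentedGroup.one_of_mem (by simp [threeGenRels])
    simp only [_root_.map_mul, _root_.map_inv, _root_.map_zpow] at h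
    exact mul_inv_eq_one.mp h
  have h2 : (PresentedGroup.of 1 : PresentedGroup (twoGenRels p))⁻¹ * PresentedGroup.of 0 ^ p
        * (PresentedGroup.of 1)⁻¹
      = PresentedGroup.of 0 ^ p * (PresentedGroup.of 1)⁻¹ * PresentedGroup.of 0 ^ p := by
    have h : PresentedGroup.mk (twoGenRels p)
        ((of 1)⁻¹ * of 0 ^ p * (of 1)⁻¹ * (of 0 ^ p * (of 1)⁻¹ * of 0 ^ p)⁻¹) = 1 :=
      PresentedGroup.one_of_mem (by simp [twoGenRels])
    simp only [_root_.map_mul, _root_.map_inv, _root_.map_zpow] at h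
    exact mul_inv_eq_one.mp h
  let f : Fin 3 → PresentedGroup (twoGenRels p) :=
    ![PresentedGroup.of 0,
      (PresentedGroup.of 1)⁻¹ * PresentedGroup.of 0 ^ p * PresentedGroup.of 1,
      PresentedGroup.of 1]
  let g : Fin 2 → PresentedGroup (threeGenRels p) :=
    ![PresentedGroup.of 0, PresentedGroup.of 2]
  have hf : ∀ w ∈ threeGenRels p, FreeGroup.lift f w = 1 := by
    rintro w (rfl | rfl)
    · simp only [_root_.map_mul, _root_.map_inv, _root_.map_zpow, FreeGroup.lift_apply_of]
      simp [f, mul_assoc]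
    · simp only [_root_.map_mul, _root_.map_inv, _root_.map_zpow, FreeGroup.lift_apply_of]
      simp only [f, zpow_neg]
      exact braid_to_conj _ _ h2
  have hg : ∀ w ∈ twoGenRels p, FreeGroup.lift g w = 1 := by
    rintro w rfl
    simp only [_root_.map_mul, _root_.map_inv, _root_.map_zpow, FreeGroup.lift_apply_of]
    rw [zpow_neg] at h3b
    exact mul_inv_eq_one.mpr (conj_to_braid _ _ _ h3a h3b)
  refine ⟨MonoidHom.toMulEquiv (PresentedGroup.toGroup hf) (PresentedGroup.toGroup hg) ?_ ?_⟩
  · ext i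
    fin_cases i
    · simp [f, g]
    · simp [f, g, h3a, mul_assoc]
    · simp [f, g]
  · ext i
    fin_cases i <;> simp [f, g]
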